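/- arXiv:1510.08118 — 2 statements merged into one kernel-verified Lean document; each statement's English description precedes it below -/
import Mathlib

section
/- Let n ≥ 1, let Λ be a full-rank lattice in ℝⁿ, let α, α', β, β' > 0 be reals and let p be a natural number with 1 ≤ p ≤ n−1 and n ≠ 2p. Then Spec(Λ,α,β,p) = Spec(Λ,α',β',p) (as functions ℝ → ℕ) if and only if α = α' and β = β'. -/
open Real
open scoped RealInnerProductSpace

/-- The dual lattice `Λ* = {v : ∀ w ∈ Λ, ⟨v,w⟩ ∈ ℤ}` of a lattice `Λ ⊆ ℝⁿ`. -/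
def dualLattice {n : ℕ} (L : Submodule ℤ (EuclideanSpace ℝ (Fin n))) :
    Set (EuclideanSpace ℝ (Fin n)) :=
  {v | ∀ w ∈ L, ∃ m : ℤ, ⟪v, w⟫ = (m : ℝ)}

/-- The spectrum, with multiplicities, of the generalized Hodge-Laplace operator
`F_{αβ} = α dδ + β δd` on `p`-forms on the flat torus `ℝⁿ/Λ` (Theorem 3.9):
`x ↦ C(n-1,p-1)·#{l ∈ Λ* : 4π²α‖l‖² = x} + C(n-1,p)·#{l ∈ Λ* : 4π²β‖l‖² = x}`. -/
noncomputable def torusSpec {n : ℕ} (L : Submodule ℤ (EuclideanSpace ℝ (Fin n)))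
    (α β : ℝ) (p : ℕ) : ℝ → ℕ := fun x =>
  (n - 1).choose (p - 1) *
      Nat.card {l : EuclideanSpace ℝ (Fin n) //
        l ∈ dualLattice L ∧ 4 * π ^ 2 * α * ‖l‖ ^ 2 = x} +
    (n - 1).choose p *
      Nat.card {l : EuclideanSpace ℝ (Fin n) //
        l ∈ dualLattice L ∧ 4 * π ^ 2 * β * ‖l‖ ^ 2 = x}

/-!
Let `μ` be the spectrum of the Laplace operator on functions on the torus. For nonzero parameters
the spectrum of `F_{αβ}` on `p`-forms is `C(n-1,p-1) • μ(·/α) + C(n-1,p) • μ(·/β)`. Off `0`, the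
function `μ` is supported on `[m, ∞)`, where `m > 0` is the first nonzero eigenvalue, so in a
relation between dilates `μ(·/γ)` the one with the smallest `|γ|` is the only one that can be
nonzero at `γ * m`. Hence the dilates are linearly independent, and comparing coefficients leaves
only the possibility of exchanging `α` and `β`, when the two binomial coefficients agree.
-/

theorem mul_div_lt_self_of_abs_le_abs {K : Type*} [Field K] [LinearOrder K]
    [IsStrictOrderedRing K] {m : K} (hm : 0 < m) {γ δ : Kˣ} (hne : δ ≠ γ)
    (hle : |(γ : K)| ≤ |(δ : K)|) : γ * m / δ < m := by
  have hratio : (γ : K) / δ ≤ 1 := by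
    refine (le_abs_self _).trans ?_
    rw [abs_div]
    exact div_le_one_of_le₀ hle (abs_nonneg _)
  have hratio_ne : (γ : K) / δ ≠ 1 := fun h ↦
    hne (Units.ext ((div_eq_one_iff_eq δ.ne_zero).mp h).symm)
  rw [mul_div_right_comm]
  exact mul_lt_of_lt_one_left hm (hratio.lt_of_ne hratio_ne)

theorem linearIndependent_dilates {K R M : Type*} [Field K] [LinearOrder K] [IsStrictOrderedRing K]
    [Semiring R] [AddCommMonoid M] [IsRightCancelAdd M] [Module R M] {f : K → M} {m : K}
    (hm : 0 < m) (hfm : Function.Injective fun r : R ↦ r • f m)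
    (hf : ∀ t < m, t ≠ 0 → f t = 0) :
    LinearIndependent R fun (γ : Kˣ) (x : K) ↦ f (x / γ) := by
  classical
  intro c d hcd
  by_contra hne
  let S := c.support ∪ d.support
  have hsum (x : K) : ∑ γ ∈ S, c γ • f (x / γ) = ∑ γ ∈ S, d γ • f (x / γ) := by
    have hx := congrFun hcd x
    rw [Finsupp.linearCombination_apply, Finsupp.linearCombination_apply,
      Finsupp.sum_of_support_subset c Finset.subset_union_left _ (by simp),
      Finsupp.sum_of_support_subset d Finset.subset_union_right _ (by simp)] at hx
    simpa only [Finset.sum_apply, Pi.smul_apply] using hx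
  -- `R` need not have subtraction, so look at the smallest `|γ|` at which `c` and `d` differ.
  have hdiff : {γ ∈ S | c γ ≠ d γ}.Nonempty := by
    obtain ⟨γ, hγ⟩ := DFunLike.ne_iff.mp hne
    exact ⟨γ, by grind⟩
  obtain ⟨γ, hγ, hmin⟩ := Finset.exists_min_image _ (fun γ : Kˣ ↦ |(γ : K)|) hdiff
  obtain ⟨hγS, hγne⟩ := Finset.mem_filter.mp hγ
  have hother : ∀ δ ∈ S.erase γ, c δ • f (γ * m / δ) = d δ • f (γ * m / δ) := by
    intro δ hδ
    obtain ⟨hδγ, hδS⟩ := Finset.mem_erase.mp hδ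
    rcases eq_or_ne (c δ) (d δ) with hδ_eq | hδ_ne
    · rw [hδ_eq]
    have hle : |(γ : K)| ≤ |(δ : K)| := hmin δ (Finset.mem_filter.mpr ⟨hδS, hδ_ne⟩)
    have hvanish : f (γ * m / δ) = 0 :=
      hf _ (mul_div_lt_self_of_abs_le_abs hm hδγ hle) (by simp [hm.ne'])
    simp only [hvanish, smul_zero]
  have hat := hsum (γ * m)
  rw [← Finset.add_sum_erase S _ hγS, ← Finset.add_sum_erase S _ hγS,
    Finset.sum_congr rfl hother, mul_div_cancel_left₀ m γ.ne_zero] at hat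
  exact hγne (hfm (add_right_cancel hat))

theorem choose_eq_choose_succ_iff {n k : ℕ} (hk : k ≤ n) :
    n.choose k = n.choose (k + 1) ↔ n = 2 * k + 1 := by
  constructor
  · intro h
    have hmul := n.choose_succ_right_eq k
    rw [← h] at hmul
    have := Nat.eq_of_mul_eq_mul_left (Nat.choose_pos hk) hmul
    lia
  · rintro rfl
    exact (Nat.choose_symm_half k).symm

section DiscreteSubgroup

variable {E : Type*} [NormedAddCommGroup E] [ProperSpace E] (M : AddSubgroup E)
  [DiscreteTopology M]

theorem finite_mem_norm_le_of_discrete (r : ℝ) : {v | v ∈ M ∧ ‖v‖ ≤ r}.Finite := by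
  have := Metric.finite_isBounded_inter_isClosed (s := (M : Set E)) DiscreteTopology.isDiscrete
    (Metric.isBounded_closedBall (x := 0) (r := r)) AddSubgroup.isClosed_of_discrete
  exact this.subset fun v hv ↦ ⟨mem_closedBall_zero_iff.mpr hv.2, hv.1⟩

variable {M} in
theorem exists_shortest_vector_of_discrete (hM : M ≠ ⊥) :
    ∃ v ∈ M, v ≠ 0 ∧ ∀ w ∈ M, w ≠ 0 → ‖v‖ ≤ ‖w‖ := by
  obtain ⟨u, hu, hu0⟩ := M.bot_or_exists_ne_zero.resolve_left hM
  have hfin : {v | (v ∈ M ∧ ‖v‖ ≤ ‖u‖) ∧ v ≠ 0}.Finite :=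
    (finite_mem_norm_le_of_discrete M ‖u‖).subset fun _ hv ↦ hv.1
  obtain ⟨v, ⟨⟨hvM, hvu⟩, hv0⟩, hmin⟩ :=
    Set.exists_min_image _ (‖·‖) hfin ⟨u, ⟨hu, le_rfl⟩, hu0⟩
  refine ⟨v, hvM, hv0, fun w hw hw0 ↦ ?_⟩
  rcases le_total ‖w‖ ‖u‖ with hwu | huw
  · exact hmin w ⟨⟨hw, hwu⟩, hw0⟩
  · exact hvu.trans huw

end DiscreteSubgroup

section Torus

variable {n : ℕ} (L : Submodule ℤ (EuclideanSpace ℝ (Fin n)))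

theorem dualLattice_eq_dualSubmodule :
    dualLattice L =
      LinearMap.BilinForm.dualSubmodule (innerₗ (EuclideanSpace ℝ (Fin n))) L := by
  ext v
  simp [dualLattice, LinearMap.BilinForm.mem_dualSubmodule, Submodule.mem_one, eq_comm]

theorem exists_basis_dualLattice_eq_span [DiscreteTopology L] [IsZLattice ℝ L] :
    ∃ b : Module.Basis (Fin n) ℝ (EuclideanSpace ℝ (Fin n)),
      dualLattice L = Submodule.span ℤ (Set.range b) := by
  let B : LinearMap.BilinForm ℝ (EuclideanSpace ℝ (Fin n)) := innerₗ _
  have hB : B.Nondegenerate :=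
    ⟨fun x hx ↦ inner_self_eq_zero.mp (hx x), fun x hx ↦ inner_self_eq_zero.mp (hx x)⟩
  have hrank : Module.finrank ℤ L = n := (ZLattice.rank ℝ L).trans finrank_euclideanSpace_fin
  let b := (Module.finBasisOfFinrankEq ℤ L hrank).ofZLatticeBasis ℝ
  have hb : Submodule.span ℤ (Set.range b) = L := Module.Basis.ofZLatticeBasis_span ℝ L _
  refine ⟨B.dualBasis hB b, ?_⟩
  rw [dualLattice_eq_dualSubmodule, ← B.dualSubmodule_span_of_basis hB b, hb]

/-- The spectrum of the Laplace operator on functions on the flat torus `ℝⁿ/Λ`: the multiplicity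
of `x` is the number of `l ∈ Λ*` with `4π²‖l‖² = x`. -/
noncomputable def laplaceSpec (x : ℝ) : ℕ :=
  Nat.card {l : EuclideanSpace ℝ (Fin n) // l ∈ dualLattice L ∧ 4 * π ^ 2 * ‖l‖ ^ 2 = x}

theorem card_dualLattice_eq_laplaceSpec (γ : ℝˣ) (x : ℝ) :
    Nat.card {l : EuclideanSpace ℝ (Fin n) //
      l ∈ dualLattice L ∧ 4 * π ^ 2 * γ * ‖l‖ ^ 2 = x} = laplaceSpec L (x / γ) := by
  simp only [laplaceSpec, eq_div_iff γ.ne_zero, mul_right_comm _ (γ : ℝ)]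

theorem torusSpec_eq_linearCombination (α β : ℝˣ) (p : ℕ) :
    torusSpec L α β p = Finsupp.linearCombination ℕ (fun (γ : ℝˣ) x ↦ laplaceSpec L (x / γ))
      (.single α ((n - 1).choose (p - 1)) + .single β ((n - 1).choose p)) := by
  ext x
  simp [torusSpec, card_dualLattice_eq_laplaceSpec]

variable [DiscreteTopology L] [IsZLattice ℝ L]

theorem laplaceSpec_ne_zero_iff {x : ℝ} :
    laplaceSpec L x ≠ 0 ↔ ∃ l ∈ dualLattice L, 4 * π ^ 2 * ‖l‖ ^ 2 = x := by
  obtain ⟨b, hb⟩ := exists_basis_dualLattice_eq_span L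
  have hfin : Finite {l // l ∈ dualLattice L ∧ 4 * π ^ 2 * ‖l‖ ^ 2 = x} := by
    refine ((finite_mem_norm_le_of_discrete
      (Submodule.span ℤ (Set.range b)).toAddSubgroup √(x / (4 * π ^ 2))).subset ?_).to_subtype
    rintro l ⟨hl, rfl⟩
    refine ⟨by simpa [hb] using hl, Real.le_sqrt_of_sq_le ?_⟩
    rw [mul_div_cancel_left₀ _ (by positivity)]
  simp only [laplaceSpec, Nat.card_ne_zero, hfin, and_true, nonempty_subtype]

theorem exists_first_eigenvalue_laplaceSpec (hn : 0 < n) :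
    ∃ m > 0, laplaceSpec L m ≠ 0 ∧ ∀ t < m, t ≠ 0 → laplaceSpec L t = 0 := by
  obtain ⟨b, hb⟩ := exists_basis_dualLattice_eq_span L
  let D := (Submodule.span ℤ (Set.range b)).toAddSubgroup
  have hD : ∀ l, l ∈ dualLattice L ↔ l ∈ D := fun l ↦ by rw [hb]; rfl
  have hD_ne : D ≠ ⊥ := fun h ↦ b.ne_zero ⟨0, hn⟩ <|
    (AddSubgroup.eq_bot_iff_forall D).mp h _ (Submodule.subset_span ⟨_, rfl⟩)
  obtain ⟨v, hv, hv0, hmin⟩ := exists_shortest_vector_of_discrete hD_ne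
  refine ⟨4 * π ^ 2 * ‖v‖ ^ 2, by positivity,
    (laplaceSpec_ne_zero_iff L).mpr ⟨v, (hD v).mpr hv, rfl⟩, fun t htm ht0 ↦ ?_⟩
  by_contra ht
  obtain ⟨l, hl, rfl⟩ := (laplaceSpec_ne_zero_iff L).mp ht
  have hl0 : l ≠ 0 := by
    rintro rfl
    simp at ht0
  have hvl : ‖v‖ ≤ ‖l‖ := hmin l ((hD l).mp hl) hl0
  exact htm.not_ge (by gcongr)

theorem linearIndependent_laplaceSpec_dilates (hn : 0 < n) :
    LinearIndependent ℕ fun (γ : ℝˣ) x ↦ laplaceSpec L (x / γ) := by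
  obtain ⟨m, hm, hLm, hL⟩ := exists_first_eigenvalue_laplaceSpec L hn
  exact linearIndependent_dilates hm (mul_left_injective₀ hLm) hL

end Torus

theorem stmt_8_general (n : ℕ) (L : Submodule ℤ (EuclideanSpace ℝ (Fin n)))
    [DiscreteTopology L] [IsZLattice ℝ L]
    (α α' β β' : ℝ) (hα : α ≠ 0) (hα' : α' ≠ 0) (hβ : β ≠ 0) (hβ' : β' ≠ 0)
    (p : ℕ) (hp : 1 ≤ p) (hpn : p ≤ n - 1) :
    torusSpec L α β p = torusSpec L α' β' p ↔
      (α = α' ∧ β = β') ∨ (n = 2 * p ∧ α = β' ∧ β = α') := by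
  lift α to ℝˣ using hα.isUnit
  lift α' to ℝˣ using hα'.isUnit
  lift β to ℝˣ using hβ.isUnit
  lift β' to ℝˣ using hβ'.isUnit
  have hpos : 0 < (n - 1).choose (p - 1) := Nat.choose_pos (by lia)
  have hpos' : 0 < (n - 1).choose p := Nat.choose_pos hpn
  have hchoose : (n - 1).choose (p - 1) = (n - 1).choose p ↔ n = 2 * p := by
    obtain ⟨k, rfl⟩ := Nat.exists_eq_add_of_le' hp
    rw [Nat.add_sub_cancel, choose_eq_choose_succ_iff (by lia)]
    lia
  rw [torusSpec_eq_linearCombination, torusSpec_eq_linearCombination,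
    (linearIndependent_laplaceSpec_dilates L (by lia)).eq_iff,
    Finsupp.single_add_single_eq_single_add_single hpos.ne' hpos'.ne', hchoose]
  simp only [Nat.add_eq_zero_iff, hpos.ne', false_and, or_false, Units.ext_iff]

/-- Theorem 3.18 (case `n ≠ 2p`): on a fixed flat torus, `F_{αβ,p}` and `F_{α'β',p}` are
isospectral iff `(α, β) = (α', β')`. -/
theorem stmt_8 (n : ℕ) (hn : 1 ≤ n)
    (L : Submodule ℤ (EuclideanSpace ℝ (Fin n)))
    [DiscreteTopology L] [IsZLattice ℝ L]
    (α α' β β' : ℝ) (hα : 0 < α) (hα' : 0 < α') (hβ : 0 < β) (hβ' : 0 < β')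
    (p : ℕ) (hp : 1 ≤ p) (hpn : p ≤ n - 1) (hn2p : n ≠ 2 * p) :
    torusSpec L α β p = torusSpec L α' β' p ↔ α = α' ∧ β = β' := by
  simpa [hn2p] using stmt_8_general n L α α' β β' hα.ne' hα'.ne' hβ.ne' hβ'.ne' p hp hpn
end

section
/- Let n ≥ 2 and let p be a natural number with 1 ≤ p ≤ n−1 and n ≠ 2p, and let α, α', β, β', r > 0 be reals. Then S(n,p,α,β,r) = S(n,p,α',β',r) (as functions ℝ → ℕ) if and only if α = α' and β = β'. -/
open scoped Classical

/-- The spectrum, with multiplicities, of the generalized Hodge-Laplace operator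
`F_{αβ} = α dδ + β δd` on `p`-forms on the round `n`-sphere of radius `r`
(Theorem 4.12 and Proposition 4.15): the eigenvalue `λ(k) = (β/r²)(k+p)(k+n-p-1)` for
`k ≥ 1` occurs with multiplicity `dim V_k^p` and the eigenvalue
`μ(k) = (α/r²)(k+p)(k+n-p+1)` for `k ≥ 0` with multiplicity `dim W_k^p`. -/
noncomputable def sphereSpec (n p : ℕ) (α β r : ℝ) : ℝ → ℕ := fun x =>
  (∑' k : ℕ,
      if 1 ≤ k ∧ (β / r ^ 2) * (((k + p) * (k + n - p - 1) : ℕ) : ℝ) = x then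
        ((n + k - 1).factorial * (n + 2 * k - 1)) /
          (p.factorial * (k - 1).factorial * (n - p - 1).factorial * (n + k - p - 1) * (k + p))
      else 0) +
  (∑' k : ℕ,
      if (α / r ^ 2) * (((k + p) * (k + n - p + 1) : ℕ) : ℝ) = x then
        ((n + k).factorial * (n + 2 * k + 1)) /
          ((p - 1).factorial * k.factorial * (n - p).factorial * (n + k - p + 1) * (k + p))
      else 0)

/-!
Both families of eigenvalues are strictly increasing in `k`, so each one has a least eigenvalue,
whose multiplicity does not depend on the scaling factors `α / r ^ 2` and `β / r ^ 2`. At the first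
levels these multiplicities are `(n + 1).choose (p + 1)` and `(n + 1).choose p`, which differ
because `n ≠ 2 * p`. The bottom of the total spectrum and its multiplicity therefore reveal which
family it comes from, hence the factor of that family; cancelling that family leaves the other one,
whose least eigenvalue gives the second factor.
-/

theorem tsum_ite_eq_extend {ι X M : Type*} [DecidableEq X] [AddCommMonoid M] [TopologicalSpace M]
    {f : ι → X} (hf : f.Injective) (g : ι → M) (x : X) :
    (∑' k, if f k = x then g k else 0) = Function.extend f g 0 x := by
  by_cases hx : ∃ k, f k = x
  · obtain ⟨k, rfl⟩ := hx
    simp only [hf.eq_iff, hf.extend_apply, tsum_ite_eq]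
  · rw [Function.extend_apply' _ _ _ hx]
    simp only [not_exists.mp hx, if_false, tsum_zero, Pi.zero_apply]

theorem eq_or_eq_of_add_eq_add_of_isLeast_support {X M : Type*} [LinearOrder X] [AddCommMonoid M]
    [Subsingleton (AddUnits M)] {f f' g g' : X → M} {s s' t t' : X}
    (hf : IsLeast f.support s) (hf' : IsLeast f'.support s')
    (hg : IsLeast g.support t) (hg' : IsLeast g'.support t')
    (hff' : f s = f' s') (hgg' : g t = g' t') (hne : f s ≠ g t) (h : f + g = f' + g') :
    s = s' ∨ t = t' := by
  have support_add (u v : X → M) : (u + v).support = u.support ∪ v.support := by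
    ext x
    simp [← not_and_or]
  have hmin : min s t = min s' t' := by
    refine (hf.union hg).unique ?_
    rw [← support_add, h, support_add]
    exact hf'.union hg'
  have eq_zero_of_lt {u : X → M} {a x : X} (hu : IsLeast u.support a) (hx : x < a) : u x = 0 :=
    Function.notMem_support.mp fun hmem => (hu.2 hmem).not_gt hx
  by_contra! hst
  rcases le_total s t with hle | hle <;> rcases le_total s' t' with hle' | hle'
  · exact hst.1 (by simpa only [min_eq_left, hle, hle'] using hmin)
  · have hst' : s = t' := by simpa only [min_eq_left, min_eq_right, hle, hle'] using hmin
    subst hst'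
    have hs := congrFun h s
    rw [Pi.add_apply, Pi.add_apply, eq_zero_of_lt hg (hle.lt_of_ne hst.2.symm),
      eq_zero_of_lt hf' (hle'.lt_of_ne hst.1), add_zero, zero_add, ← hgg'] at hs
    exact hne hs
  · have hts' : t = s' := by simpa only [min_eq_left, min_eq_right, hle, hle'] using hmin
    subst hts'
    have ht := congrFun h t
    rw [Pi.add_apply, Pi.add_apply, eq_zero_of_lt hf (hle.lt_of_ne hst.1.symm),
      eq_zero_of_lt hg' (hle'.lt_of_ne hst.2), add_zero, zero_add, ← hff'] at ht
    exact hne ht.symm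
  · exact hst.2 (by simpa only [min_eq_right, hle, hle'] using hmin)

/-- The spectrum of `c • A` as a multiplicity function, where the operator `A` has the distinct
eigenvalues `u k` with multiplicities `d k`. A `k` with `d k = 0` contributes nothing. -/
noncomputable def scaledSpectrum {ι K M : Type*} [Mul K] [Zero M] (u : ι → K) (d : ι → M) (c : K) :
    K → M :=
  Function.extend (fun k => c * u k) d 0

theorem scaledSpectrum_apply_mul {ι K M : Type*} [Mul K] [Zero K] [IsLeftCancelMulZero K] [Zero M]
    {u : ι → K} {d : ι → M} {c : K} (hu : u.Injective) (hc : c ≠ 0) (k : ι) :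
    scaledSpectrum u d c (c * u k) = d k :=
  ((mul_right_injective₀ hc).comp hu).extend_apply d 0 k

section ScaledSpectrum

variable {ι κ K M : Type*} [LinearOrder ι] [LinearOrder κ] [Ring K] [LinearOrder K]
  [IsStrictOrderedRing K] {u : ι → K} {v : κ → K} {c : K} {i : ι} {j : κ}

theorem isLeast_support_scaledSpectrum [Zero M] {d : ι → M} (hu : StrictMono u) (hc : 0 < c)
    (hd : IsLeast d.support i) : IsLeast (scaledSpectrum u d c).support (c * u i) := by
  have hcu : StrictMono fun k => c * u k := hu.const_mul hc
  rw [scaledSpectrum, Function.support_extend_zero hcu.injective]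
  exact hcu.monotone.map_isLeast hd

theorem injOn_scaledSpectrum [Zero M] {d : ι → M} (hu : StrictMono u)
    (hd : IsLeast d.support i) (hui : u i ≠ 0) :
    Set.InjOn (scaledSpectrum u d) (Set.Ioi 0) := by
  intro a ha b hb hab
  have hleast := isLeast_support_scaledSpectrum hu ha hd
  rw [hab] at hleast
  exact mul_right_cancel₀ hui (hleast.unique (isLeast_support_scaledSpectrum hu hb hd))

theorem scaledSpectrum_add_scaledSpectrum_inj [AddCancelCommMonoid M] [Subsingleton (AddUnits M)]
    {d : ι → M} {e : κ → M} (hu : StrictMono u) (hv : StrictMono v)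
    (hd : IsLeast d.support i) (he : IsLeast e.support j) (hui : u i ≠ 0) (hvj : v j ≠ 0)
    (hde : d i ≠ e j) {a a' b b' : K} (ha : 0 < a) (ha' : 0 < a') (hb : 0 < b) (hb' : 0 < b') :
    scaledSpectrum u d a + scaledSpectrum v e b = scaledSpectrum u d a' + scaledSpectrum v e b' ↔
      a = a' ∧ b = b' := by
  refine ⟨fun h => ?_, by rintro ⟨rfl, rfl⟩; rfl⟩
  have hbottom : a * u i = a' * u i ∨ b * v j = b' * v j := by
    have hu_apply {c : K} (hc : 0 < c) : scaledSpectrum u d c (c * u i) = d i :=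
      scaledSpectrum_apply_mul hu.injective hc.ne' i
    have hv_apply {c : K} (hc : 0 < c) : scaledSpectrum v e c (c * v j) = e j :=
      scaledSpectrum_apply_mul hv.injective hc.ne' j
    exact eq_or_eq_of_add_eq_add_of_isLeast_support
      (isLeast_support_scaledSpectrum hu ha hd) (isLeast_support_scaledSpectrum hu ha' hd)
      (isLeast_support_scaledSpectrum hv hb he) (isLeast_support_scaledSpectrum hv hb' he)
      ((hu_apply ha).trans (hu_apply ha').symm) ((hv_apply hb).trans (hv_apply hb').symm)
      (by rwa [hu_apply ha, hv_apply hb]) h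
  rcases hbottom with hu_eq | hv_eq
  · obtain rfl := mul_right_cancel₀ hui hu_eq
    exact ⟨rfl, injOn_scaledSpectrum hv he hvj hb hb' (add_left_cancel h)⟩
  · obtain rfl := mul_right_cancel₀ hvj hv_eq
    exact ⟨injOn_scaledSpectrum hu hd hui ha ha' (add_right_cancel h), rfl⟩

end ScaledSpectrum

theorem choose_succ_right_eq_choose_iff {N k : ℕ} (hk : k ≤ N) :
    N.choose (k + 1) = N.choose k ↔ N = 2 * k + 1 := by
  have hpos : 0 < N.choose k := Nat.choose_pos hk
  have hrec : N.choose (k + 1) * (k + 1) = N.choose k * (N - k) := Nat.choose_succ_right_eq N k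
  calc
    N.choose (k + 1) = N.choose k ↔ N.choose (k + 1) * (k + 1) = N.choose k * (k + 1) :=
      (Nat.mul_left_inj k.succ_ne_zero).symm
    _ ↔ N - k = k + 1 := by rw [hrec, Nat.mul_right_inj hpos.ne']
    _ ↔ N = 2 * k + 1 := by omega

/-- The `k`-th eigenvalue of `δd` on coexact `p`-forms on the unit `n`-sphere, for `k ≥ 1`. -/
def coexactEigenvalue (n p k : ℕ) : ℝ :=
  ((k + p) * (k + n - p - 1) : ℕ)

/-- The `k`-th eigenvalue of `dδ` on exact `p`-forms on the unit `n`-sphere. -/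
def exactEigenvalue (n p k : ℕ) : ℝ :=
  ((k + p) * (k + n - p + 1) : ℕ)

/-- The dimension of the eigenspace `V_k^p` of coexact `p`-forms, extended by `0` to `k = 0`, where
there is no eigenspace. -/
def coexactDim (n p k : ℕ) : ℕ :=
  if 1 ≤ k then
    ((n + k - 1).factorial * (n + 2 * k - 1)) /
      (p.factorial * (k - 1).factorial * (n - p - 1).factorial * (n + k - p - 1) * (k + p))
  else 0

/-- The dimension of the eigenspace `W_k^p` of exact `p`-forms. -/
def exactDim (n p k : ℕ) : ℕ :=
  ((n + k).factorial * (n + 2 * k + 1)) /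
    ((p - 1).factorial * k.factorial * (n - p).factorial * (n + k - p + 1) * (k + p))

section Sphere

variable {n p : ℕ}

theorem strictMono_coexactEigenvalue (hpn : p < n) : StrictMono (coexactEigenvalue n p) := by
  intro k l hkl
  exact Nat.cast_lt.mpr (Nat.mul_lt_mul'' (by omega) (by omega))

theorem strictMono_exactEigenvalue (hpn : p ≤ n) : StrictMono (exactEigenvalue n p) := by
  intro k l hkl
  exact Nat.cast_lt.mpr (Nat.mul_lt_mul'' (by omega) (by omega))

theorem coexactEigenvalue_one_ne_zero (hpn : p < n) : coexactEigenvalue n p 1 ≠ 0 :=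
  Nat.cast_ne_zero.mpr (Nat.mul_ne_zero (by omega) (by omega))

theorem exactEigenvalue_zero_ne_zero (hp : p ≠ 0) : exactEigenvalue n p 0 ≠ 0 :=
  Nat.cast_ne_zero.mpr (Nat.mul_ne_zero (by omega) (by omega))

theorem coexactDim_one (hpn : p < n) : coexactDim n p 1 = (n + 1).choose (p + 1) := by
  obtain ⟨m, rfl⟩ := Nat.exists_eq_add_of_lt hpn
  rw [coexactDim, if_pos le_rfl, Nat.choose_eq_factorial_div_factorial (by omega),
    show p + m + 1 + 1 - (p + 1) = m + 1 by omega, show p + m + 1 + 1 - p - 1 = m + 1 by omega,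
    show p + m + 1 - p - 1 = m by omega]
  congr 1
  · rw [Nat.factorial_succ (p + m + 1), mul_comm]
    rfl
  · rw [Nat.factorial_succ m, Nat.factorial_succ p, Nat.sub_self, Nat.factorial_zero]
    ring

theorem exactDim_zero (hp : p ≠ 0) (hpn : p ≤ n) : exactDim n p 0 = (n + 1).choose p := by
  obtain ⟨q, rfl⟩ := Nat.exists_eq_add_one_of_ne_zero hp
  obtain ⟨m, rfl⟩ := Nat.exists_eq_add_of_le hpn
  rw [exactDim, Nat.choose_eq_factorial_div_factorial (by omega), Nat.mul_zero, Nat.add_zero,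
    Nat.add_zero, Nat.add_sub_cancel_left, Nat.add_assoc _ m 1, Nat.add_sub_cancel_left]
  congr 1
  · rw [← Nat.add_assoc, Nat.factorial_succ (q + 1 + m), mul_comm]
  · rw [Nat.factorial_succ m, Nat.factorial_succ q, Nat.factorial_zero, Nat.add_sub_cancel]
    ring

theorem isLeast_support_coexactDim (hpn : p < n) : IsLeast (coexactDim n p).support 1 := by
  refine ⟨?_, fun k hk => ?_⟩
  · rw [Function.mem_support, coexactDim_one hpn]
    exact (Nat.choose_pos (by omega)).ne'
  · by_contra hk'
    exact hk (if_neg hk')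

theorem isLeast_support_exactDim (hp : p ≠ 0) (hpn : p ≤ n) : IsLeast (exactDim n p).support 0 := by
  refine ⟨?_, fun k _ => k.zero_le⟩
  rw [Function.mem_support, exactDim_zero hp hpn]
  exact (Nat.choose_pos (by omega)).ne'

theorem coexactDim_one_eq_exactDim_zero_iff (hp : p ≠ 0) (hpn : p < n) :
    coexactDim n p 1 = exactDim n p 0 ↔ n = 2 * p := by
  rw [coexactDim_one hpn, exactDim_zero hp hpn.le, choose_succ_right_eq_choose_iff (by omega),
    Nat.add_right_cancel_iff]

theorem sphereSpec_eq_add (hpn : p < n) {α β r : ℝ} (hα : 0 < α) (hβ : 0 < β) (hr : r ≠ 0) :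
    sphereSpec n p α β r =
      scaledSpectrum (coexactEigenvalue n p) (coexactDim n p) (β / r ^ 2) +
        scaledSpectrum (exactEigenvalue n p) (exactDim n p) (α / r ^ 2) := by
  have hcoexact : Function.Injective fun k => β / r ^ 2 * coexactEigenvalue n p k :=
    ((strictMono_coexactEigenvalue hpn).const_mul (by positivity)).injective
  have hexact : Function.Injective fun k => α / r ^ 2 * exactEigenvalue n p k :=
    ((strictMono_exactEigenvalue hpn.le).const_mul (by positivity)).injective
  ext x
  simp only [Pi.add_apply, scaledSpectrum, ← tsum_ite_eq_extend hcoexact,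
    ← tsum_ite_eq_extend hexact]
  simp only [sphereSpec, and_comm (a := 1 ≤ _), ite_and]
  rfl

end Sphere

/-- Theorem 4.21 (case `n ≠ 2p`): on a fixed sphere, `F_{αβ,p}` and `F_{α'β',p}` are
isospectral iff `(α, β) = (α', β')`. -/
theorem stmt_15 (n p : ℕ) (hn : 2 ≤ n) (hp : 1 ≤ p) (hpn : p ≤ n - 1) (hn2p : n ≠ 2 * p)
    (α α' β β' r : ℝ) (hα : 0 < α) (hα' : 0 < α') (hβ : 0 < β) (hβ' : 0 < β') (hr : 0 < r) :
    sphereSpec n p α β r = sphereSpec n p α' β' r ↔ α = α' ∧ β = β' := by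
  have hp0 : p ≠ 0 := by omega
  have hpn' : p < n := by omega
  have hdim : coexactDim n p 1 ≠ exactDim n p 0 :=
    (coexactDim_one_eq_exactDim_zero_iff hp0 hpn').not.mpr hn2p
  have hr2 : r ^ 2 ≠ 0 := by positivity
  rw [sphereSpec_eq_add hpn' hα hβ hr.ne', sphereSpec_eq_add hpn' hα' hβ' hr.ne',
    scaledSpectrum_add_scaledSpectrum_inj
      (strictMono_coexactEigenvalue hpn') (strictMono_exactEigenvalue hpn'.le)
      (isLeast_support_coexactDim hpn') (isLeast_support_exactDim hp0 hpn'.le)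
      (coexactEigenvalue_one_ne_zero hpn') (exactEigenvalue_zero_ne_zero hp0) hdim
      (by positivity) (by positivity) (by positivity) (by positivity),
    div_left_inj' hr2, div_left_inj' hr2, and_comm]
end
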